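/- Let G be a finite simple graph, U a stable subset of V(G), and β_v (v ∈ U) non-negative integers. Suppose that ∑_{v∈S} β_v ≥ ω(G−S) + |S| − 1 for every S ⊆ U. Then for every X ⊆ E(G), B(X) + |V(G)| − ω_G(E(G)∖X) ≥ |V(G)| − 1, where B(X) = ∑_{v∈U} min{β_v, |X ∩ δ_G(v)|} + |X ∖ δ_G(U)|. -/

import Mathlib

/-!
Write `ω` for the number of components of a spanning edge set. Since the claim amounts to
`ω (E ∖ X) ≤ B(X) + 1`, let `S ⊆ U` consist of the vertices at which the minimum in `B(X)` is
`β v`, and let `Y` be the set of edges of `X` with no endpoint in `S`. Adding the edges of `Y` to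
`E ∖ X` lowers `ω` by at most `|Y|` (`omegaE_le_union`), and the result contains every edge of
`G - S`, so it has at most `ω(G - S) + |S|` components (`omegaE_le_induce`). Every edge of `Y`
lies outside `δ(U)` or in `δ(v)` for some `v ∈ U ∖ S`, so
`|Y| ≤ |X ∖ δ(U)| + ∑_{v ∈ U ∖ S} |X ∩ δ(v)|`, and the hypothesis for `S` finishes the argument.
-/

open SimpleGraph

/-- The set of edges of `G` with exactly one endpoint in `S`. -/
def cutSet {V : Type*} (G : SimpleGraph V) (S : Set V) : Set (Sym2 V) :=
  {e ∈ G.edgeSet | ∃ u v, e = s(u, v) ∧ u ∈ S ∧ v ∉ S}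

/-- The number of connected components of the graph with vertex set `V` and edge set `X`. -/
noncomputable def omegaE {V : Type*} (X : Set (Sym2 V)) : ℕ :=
  Nat.card (SimpleGraph.fromEdgeSet X).ConnectedComponent

/-- A vertex map that is constant on the edges of `H` is constant on its components. -/
lemma eq_of_reachable_of_adj {V W : Type*} {H : SimpleGraph V} (f : V → W)
    (hf : ∀ u v, H.Adj u v → f u = f v) {u v : V} (huv : H.Reachable u v) : f u = f v := by
  obtain ⟨p⟩ := huv
  induction p with
  | nil => rfl
  | cons hadj _ ih => exact (hf _ _ hadj).trans ih

lemma omegaE_le_insert {V : Type*} [Finite V] (A : Set (Sym2 V)) (e : Sym2 V) :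
    omegaE A ≤ omegaE (insert e A) + 1 := by
  classical
  induction e using Sym2.ind with
  | _ a b =>
  let H := SimpleGraph.fromEdgeSet A
  let H' := SimpleGraph.fromEdgeSet (insert s(a, b) A)
  -- Redirecting the component of `b` to that of `a` gives a map constant on components of `H'`.
  let g : V → H.ConnectedComponent := fun v =>
    if H.connectedComponentMk v = H.connectedComponentMk b then H.connectedComponentMk a
    else H.connectedComponentMk v
  have hga : g a = H.connectedComponentMk a := by simp only [g]; split_ifs <;> rfl
  have hgb : g b = H.connectedComponentMk a := by simp [g]
  have hg : ∀ u v, H'.Adj u v → g u = g v := by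
    intro u v huv
    rw [SimpleGraph.fromEdgeSet_adj] at huv
    obtain ⟨h1 | h1, hne⟩ := huv
    · rcases Sym2.eq_iff.1 h1 with ⟨rfl, rfl⟩ | ⟨rfl, rfl⟩
      · rw [hga, hgb]
      · rw [hga, hgb]
    · have hadj : H.Adj u v := (SimpleGraph.fromEdgeSet_adj A).2 ⟨h1, hne⟩
      have := SimpleGraph.ConnectedComponent.sound hadj.reachable
      simp only [g, this]
  let φ : Option H'.ConnectedComponent → H.ConnectedComponent := fun o =>
    o.elim (H.connectedComponentMk b)
      (SimpleGraph.ConnectedComponent.lift g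
        (fun _ _ p _ => eq_of_reachable_of_adj g hg ⟨p⟩))
  have hφ : Function.Surjective φ := by
    intro c
    induction c using SimpleGraph.ConnectedComponent.ind with
    | _ v =>
    by_cases hv : H.connectedComponentMk v = H.connectedComponentMk b
    · exact ⟨none, hv.symm⟩
    · refine ⟨some (H'.connectedComponentMk v), ?_⟩
      exact if_neg hv
  have := Nat.card_le_card_of_surjective φ hφ
  rwa [Finite.card_option] at this

lemma omegaE_le_union {V : Type*} [Finite V] (A Y : Set (Sym2 V)) :
    omegaE A ≤ omegaE (Y ∪ A) + Y.ncard := by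
  induction Y, Y.toFinite using Set.Finite.induction_on with
  | empty => simp
  | @insert e Y he hY ih =>
    rw [Set.ncard_insert_of_notMem he hY, Set.insert_union]
    have := omegaE_le_insert (Y ∪ A) e
    omega

/-- An edge set containing every edge of `G - S` has at most `ω(G - S) + |S|` components, since
each of its components meets `S` or contains a component of `G - S`. -/
lemma omegaE_le_induce {V : Type*} [Finite V] (G : SimpleGraph V) (S : Finset V)
    (F : Set (Sym2 V)) (hF : ∀ u v, G.Adj u v → u ∉ S → v ∉ S → s(u, v) ∈ F) :
    omegaE F ≤ Nat.card ((G.induce ((↑S : Set V)ᶜ)).ConnectedComponent) + S.card := by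
  let H := SimpleGraph.fromEdgeSet F
  let K := G.induce ((↑S : Set V)ᶜ)
  let f : K →g H := ⟨Subtype.val, fun {u v} huv =>
    (SimpleGraph.fromEdgeSet_adj F).2 ⟨hF _ _ huv u.2 v.2, G.ne_of_adj huv⟩⟩
  let φ : K.ConnectedComponent ⊕ S → H.ConnectedComponent :=
    Sum.elim (fun c => c.map f) (fun s => H.connectedComponentMk s)
  have hφ : Function.Surjective φ := by
    intro c
    induction c using SimpleGraph.ConnectedComponent.ind with
    | _ v =>
    by_cases hv : v ∈ S
    · exact ⟨Sum.inr ⟨v, hv⟩, rfl⟩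
    · exact ⟨Sum.inl (K.connectedComponentMk ⟨v, hv⟩), rfl⟩
  have := Nat.card_le_card_of_surjective φ hφ
  rwa [Nat.card_sum, Nat.card_eq_fintype_card (α := S), Fintype.card_coe] at this

theorem stmt_17 {V : Type*} [Fintype V] [DecidableEq V] (G : SimpleGraph V)
    (U : Finset V) (hU : ∀ u ∈ U, ∀ v ∈ U, ¬ G.Adj u v) (β : V → ℕ)
    (h : ∀ S ⊆ U,
      Nat.card ((G.induce ((↑S : Set V)ᶜ)).ConnectedComponent) + S.card - 1 ≤
        ∑ v ∈ S, β v) :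
    ∀ X ⊆ G.edgeSet,
      Fintype.card V - 1 ≤
        ((∑ v ∈ U, min (β v) (X ∩ G.incidenceSet v).ncard) +
            (X \ cutSet G (↑U : Set V)).ncard) +
          (Fintype.card V - omegaE (G.edgeSet \ X)) := by
  intro X hX
  let S := U.filter fun v => β v < (X ∩ G.incidenceSet v).ncard
  let T := U.filter fun v => ¬ β v < (X ∩ G.incidenceSet v).ncard
  let Y : Set (Sym2 V) := {e ∈ X | ∀ v ∈ S, v ∉ e}
  have hS := h S (Finset.filter_subset _ _)
  have hsum : ∑ v ∈ U, min (β v) (X ∩ G.incidenceSet v).ncard =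
      ∑ v ∈ S, β v + ∑ v ∈ T, (X ∩ G.incidenceSet v).ncard := by
    rw [← Finset.sum_filter_add_sum_filter_not U
      (fun v => β v < (X ∩ G.incidenceSet v).ncard)]
    congr 1
    · exact Finset.sum_congr rfl fun v hv => min_eq_left (Finset.mem_filter.1 hv).2.le
    · exact Finset.sum_congr rfl fun v hv =>
        min_eq_right (not_lt.1 (Finset.mem_filter.1 hv).2)
  have hY : Y.ncard ≤ (X \ cutSet G (↑U : Set V)).ncard +
      ∑ v ∈ T, (X ∩ G.incidenceSet v).ncard := by
    have hsub : Y ⊆ (X \ cutSet G (↑U : Set V)) ∪ ⋃ v ∈ T, X ∩ G.incidenceSet v := by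
      rintro e ⟨heX, heS⟩
      by_cases hc : e ∈ cutSet G (↑U : Set V)
      · obtain ⟨heG, u, v, rfl, hu, -⟩ := hc
        have hue : u ∈ s(u, v) := Sym2.mem_mk_left u v
        refine Or.inr (Set.mem_biUnion (x := u) ?_ ⟨heX, heG, hue⟩)
        exact Finset.mem_filter.2
          ⟨hu, fun hlt => heS u (Finset.mem_filter.2 ⟨hu, hlt⟩) hue⟩
      · exact Or.inl ⟨heX, hc⟩
    refine (Set.ncard_le_ncard hsub (Set.toFinite _)).trans
      ((Set.ncard_union_le _ _).trans (Nat.add_le_add_left ?_ _))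
    exact Finset.set_ncard_biUnion_le _ _
  have h1 := omegaE_le_union (G.edgeSet \ X) Y
  have h2 := omegaE_le_induce G S (Y ∪ G.edgeSet \ X) (by
    intro u v huv hu hv
    by_cases hx : s(u, v) ∈ X
    · refine Or.inl ⟨hx, fun w hw hwe => ?_⟩
      rcases Sym2.mem_iff.1 hwe with rfl | rfl
      · exact hu hw
      · exact hv hw
    · exact Or.inr ⟨huv, hx⟩)
  rw [hsum]
  omega
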